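/- arXiv:0808.1442 — 2 statements merged into one kernel-verified Lean document; each statement's English description precedes it below -/
import Mathlib

section
/- For every τ in the complex upper half-plane ℍ (so 0 < |q| < 1), one has M(q) = −(1/(2·Θ₂(τ)))·Σ_{n∈ℤ} q^{16n²−8n}/(1 + q^{16n−8}). -/
noncomputable section
open Complex Real

/-- `q = e^{2πiτ}`. -/
def nome (τ : ℂ) : ℂ := Complex.exp (2 * (π : ℂ) * I * τ)

/-- `Θ₂(τ) = Σ_{n≥0} q^{(2n+1)²}`. -/
def Theta2 (τ : ℂ) : ℂ := ∑' n : ℕ, nome τ ^ ((2 * n + 1) ^ 2)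

/-- The mock theta function
`M(x) = x⁻¹ Σ_{n≥0} (−1)^{n+1} x^{8(n+1)²} ∏_{k=1}^n (1−x^{16k−8}) / ∏_{k=1}^{n+1} (1+x^{16k−8})²`. -/
def Mser (x : ℂ) : ℂ :=
  x⁻¹ * ∑' n : ℕ, (-1 : ℂ) ^ (n + 1) * x ^ (8 * (n + 1) ^ 2) *
    (∏ k ∈ Finset.range n, (1 - x ^ (16 * (k + 1) - 8))) /
    (∏ k ∈ Finset.range (n + 1), (1 + x ^ (16 * (k + 1) - 8)) ^ 2)


/-- `(Q²;Q²)_k` -/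
def ppr (Q : ℂ) (k : ℕ) : ℂ := ∏ i ∈ Finset.range k, (1 - Q ^ (2 * (i + 1)))
/-- `(Q;Q²)_k` -/
def oqr (Q : ℂ) (k : ℕ) : ℂ := ∏ i ∈ Finset.range k, (1 - Q ^ (2 * i + 1))
/-- `(-Q;Q²)_k` -/
def omr (Q : ℂ) (k : ℕ) : ℂ := ∏ i ∈ Finset.range k, (1 + Q ^ (2 * i + 1))
/-- Bailey kernel. -/
def wker (Q : ℂ) (n r : ℕ) : ℂ := if r ≤ n then 1 / (ppr Q (n - r) * ppr Q (n + r + 1)) else 0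
/-- The weight. -/
def dwt (Q : ℂ) (n : ℕ) : ℂ := (-1) ^ n * Q ^ ((n + 1) ^ 2) * oqr Q n
/-- Unit Bailey pair. -/
def uco (Q : ℂ) (r : ℕ) : ℂ := (-1) ^ r * Q ^ (r * (r - 1)) * (1 - Q ^ (4 * r + 2))
/-- The second Bailey pair. -/
def vco (Q : ℂ) (r : ℕ) : ℂ :=
  (-1) ^ r * Q ^ (r * (r + 1)) * (1 - Q ^ (2 * r + 1)) / (1 + Q ^ (2 * r + 1))

lemma norm_pow_lt {Q : ℂ} (h : ‖Q‖ < 1) {k : ℕ} (hk : k ≠ 0) : ‖Q ^ k‖ < 1 := by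
  rw [norm_pow]; exact pow_lt_one₀ (norm_nonneg _) h hk

lemma one_sub_ne {Q : ℂ} (h : ‖Q‖ < 1) {k : ℕ} (hk : k ≠ 0) : 1 - Q ^ k ≠ 0 := by
  intro h0
  have := norm_pow_lt h hk
  rw [← sub_eq_zero.mp h0] at this
  simp at this

lemma one_add_ne {Q : ℂ} (h : ‖Q‖ < 1) {k : ℕ} (hk : k ≠ 0) : 1 + Q ^ k ≠ 0 := by
  intro h0
  have := norm_pow_lt h hk
  rw [eq_neg_of_add_eq_zero_right h0] at this
  simp at this

lemma ppr_ne {Q : ℂ} (h : ‖Q‖ < 1) (k : ℕ) : ppr Q k ≠ 0 :=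
  Finset.prod_ne_zero_iff.mpr fun i _ => one_sub_ne h (by omega)

lemma omr_ne {Q : ℂ} (h : ‖Q‖ < 1) (k : ℕ) : omr Q k ≠ 0 :=
  Finset.prod_ne_zero_iff.mpr fun i _ => one_add_ne h (by omega)

lemma ppr_succ (Q : ℂ) (k : ℕ) : ppr Q (k + 1) = ppr Q k * (1 - Q ^ (2 * (k + 1))) :=
  Finset.prod_range_succ _ _

lemma wker_succ_right {Q : ℂ} (h : ‖Q‖ < 1) (n r : ℕ) :
    wker Q n (r + 1) * (1 - Q ^ (2 * (n + r + 2))) = wker Q n r * (1 - Q ^ (2 * (n - r))) := by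
  unfold wker
  rcases lt_trichotomy r n with hr | hr | hr
  · obtain ⟨m, rfl⟩ := Nat.exists_eq_add_of_lt hr
    rw [if_pos (by omega), if_pos (by omega)]
    have e1 : r + m + 1 - (r + 1) = m := by omega
    have e2 : r + m + 1 - r = m + 1 := by omega
    have e3 : r + m + 1 + (r + 1) + 1 = (r + m + 1 + r + 1) + 1 := by omega
    rw [e1, e2, e3, ppr_succ Q m, ppr_succ Q (r + m + 1 + r + 1)]
    have a1 := ppr_ne h m
    have a2 := ppr_ne h (r + m + 1 + r + 1)
    have a3 := one_sub_ne h (k := 2 * (m + 1)) (by omega)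
    have a4 := one_sub_ne h (k := 2 * (r + m + 1 + r + 1 + 1)) (by omega)
    have e4 : 2 * (r + m + 1 + r + 2) = 2 * (r + m + 1 + r + 1 + 1) := by omega
    rw [e4]
    field_simp
  · subst hr
    simp
  · rw [if_neg (by omega), if_neg (by omega)]; simp

lemma wker_succ_left {Q : ℂ} (h : ‖Q‖ < 1) (n r : ℕ) :
    wker Q (n + 1) r * ((1 - Q ^ (2 * (n + 1 - r))) * (1 - Q ^ (2 * (n + r + 2)))) = wker Q n r := by
  unfold wker
  rcases lt_trichotomy r (n + 1) with hr | hr | hr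
  · obtain ⟨m, rfl⟩ := Nat.exists_eq_add_of_le (Nat.lt_succ_iff.mp hr)
    rw [if_pos (by omega), if_pos (by omega)]
    have e1 : r + m + 1 - r = m + 1 := by omega
    have e2 : r + m - r = m := by omega
    have e3 : r + m + 1 + r + 1 = (r + m + r + 1) + 1 := by omega
    have e4 : 2 * (r + m + r + 2) = 2 * (r + m + r + 1 + 1) := by omega
    rw [e1, e2, e3, e4, ppr_succ Q m, ppr_succ Q (r + m + r + 1)]
    have a1 := ppr_ne h m
    have a2 := ppr_ne h (r + m + r + 1)
    have a3 := one_sub_ne h (k := 2 * (m + 1)) (by omega)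
    have a4 := one_sub_ne h (k := 2 * (r + m + r + 1 + 1)) (by omega)
    field_simp
  · subst hr
    simp
  · rw [if_neg (by omega), if_neg (by omega)]; simp

lemma wker_gt (Q : ℂ) {n r : ℕ} (h : n < r) : wker Q n r = 0 := if_neg (by omega)

lemma unit_partial {Q : ℂ} (h : ‖Q‖ < 1) (n R : ℕ) (hR : R ≤ n + 1) :
    (∑ r ∈ Finset.range R, uco Q r * wker Q n r) * (1 - Q ^ (2 * n)) =
      -((-1) ^ R * (1 - Q ^ (2 * R)) * (1 - Q ^ (2 * (n + R + 1))) * Q ^ (R * (R - 1))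
        * wker Q n R) := by
  induction R with
  | zero => simp
  | succ R ih =>
    rw [Finset.sum_range_succ, add_mul, ih (by omega)]
    have hw := wker_succ_right h n R
    obtain ⟨m, rfl⟩ := Nat.exists_eq_add_of_le (Nat.lt_succ_iff.mp hR)
    have e1 : R + m - R = m := by omega
    rw [e1] at hw
    have e2 : (R + 1) * (R + 1 - 1) = R * (R - 1) + 2 * R := by
      cases R <;> simp; ring
    have e3 : 2 * (R + m + (R + 1) + 1) = 2 * (R + m + R + 2) := by omega
    rw [e2, e3, show -((-1 : ℂ) ^ (R + 1) * (1 - Q ^ (2 * (R + 1))) * (1 - Q ^ (2 * (R + m + R + 2))) *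
      Q ^ (R * (R - 1) + 2 * R) * wker Q (R + m) (R + 1)) =
      -((-1 : ℂ) ^ (R + 1) * (1 - Q ^ (2 * (R + 1))) *
      Q ^ (R * (R - 1) + 2 * R) * (wker Q (R + m) (R + 1) * (1 - Q ^ (2 * (R + m + R + 2))))) by ring,
      hw]
    unfold uco
    generalize wker Q (R + m) R = W
    rw [pow_add Q (R * (R - 1)), pow_succ (-1 : ℂ)]
    generalize Q ^ (R * (R - 1)) = E
    generalize (-1 : ℂ) ^ R = s
    ring

lemma unit_sum {Q : ℂ} (h : ‖Q‖ < 1) (n : ℕ) :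
    ∑ r ∈ Finset.range (n + 1), uco Q r * wker Q n r = if n = 0 then 1 else 0 := by
  by_cases hn : n = 0
  · subst hn
    have := one_sub_ne h (k := 2) (by omega)
    simp [uco, wker, ppr]
    field_simp
  · rw [if_neg hn]
    have := unit_partial h n (n + 1) le_rfl
    rw [wker_gt Q (Nat.lt_succ_self n), mul_zero, neg_zero] at this
    exact (mul_eq_zero.mp this).resolve_right (one_sub_ne h (by omega))

lemma v_step {Q : ℂ} (h : ‖Q‖ < 1) (n r : ℕ) (hr : r ≤ n + 1) :
    (1 + Q ^ (2 * (n + 1) + 1)) ^ 2 * (vco Q r * wker Q (n + 1) r) =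
      vco Q r * wker Q n r + Q ^ (2 * (n + 1)) * (uco Q r * wker Q (n + 1) r) := by
  rw [← wker_succ_left h n r]
  generalize wker Q (n + 1) r = W
  obtain ⟨m, hm⟩ := Nat.exists_eq_add_of_le hr
  have e1 : n + 1 - r = m := by omega
  have e2 : n + r + 2 = r + m + r + 1 := by omega
  rw [e1, e2, hm]
  have e3 : r * (r + 1) = r * (r - 1) + 2 * r := by cases r <;> simp; ring
  unfold vco uco
  have a1 := one_add_ne h (k := 2 * r + 1) (by omega)
  rw [e3, pow_add Q (r * (r - 1))]
  generalize Q ^ (r * (r - 1)) = E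
  generalize (-1 : ℂ) ^ r = s
  field_simp
  ring

lemma v_sum {Q : ℂ} (h : ‖Q‖ < 1) (n : ℕ) :
    ∑ r ∈ Finset.range (n + 1), vco Q r * wker Q n r = 1 / omr Q (n + 1) ^ 2 := by
  induction n with
  | zero =>
    have a1 := one_sub_ne h (k := 2) (by omega)
    have a2 := one_add_ne h (k := 1) (by omega)
    simp [vco, wker, ppr, omr] at a2 ⊢
    field_simp
    ring
  | succ n ih =>
    have a := one_add_ne h (k := 2 * (n + 1) + 1) (by omega)
    have b := omr_ne h (n + 1)
    have key : (1 + Q ^ (2 * (n + 1) + 1)) ^ 2 *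
        ∑ r ∈ Finset.range (n + 1 + 1), vco Q r * wker Q (n + 1) r = 1 / omr Q (n + 1) ^ 2 := by
      rw [Finset.mul_sum, Finset.sum_congr rfl (fun r hr => v_step h n r
        (by have := Finset.mem_range.mp hr; omega)), Finset.sum_add_distrib, ← Finset.mul_sum,
        unit_sum h (n + 1), if_neg (by omega), Finset.sum_range_succ, ih, wker_gt Q (Nat.lt_succ_self n)]
      simp
    have e : omr Q (n + 1 + 1) = omr Q (n + 1) * (1 + Q ^ (2 * (n + 1) + 1)) :=
      Finset.prod_range_succ _ _
    rw [e, mul_pow]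
    field_simp at key ⊢
    linear_combination key

lemma quad_bound (A ρ : ℝ) (hA : 0 ≤ A) (h0 : 0 ≤ ρ) (h1 : ρ < 1) :
    ∃ K : ℝ, 0 ≤ K ∧ ∀ n : ℕ, A ^ n * ρ ^ (n ^ 2) ≤ K * (1 / 4) ^ n := by
  have ht : Filter.Tendsto (fun n : ℕ => 4 * A * ρ ^ n) Filter.atTop (nhds 0) := by
    simpa using (tendsto_pow_atTop_nhds_zero_of_lt_one h0 h1).const_mul (4 * A)
  obtain ⟨N, hN⟩ := Filter.eventually_atTop.mp (ht.eventually_le_const (zero_lt_one))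
  refine ⟨1 + ∑ n ∈ Finset.range N, (4 * A * ρ ^ n) ^ n, by positivity, fun n => ?_⟩
  have e : A ^ n * ρ ^ (n ^ 2) = (4 * A * ρ ^ n) ^ n * (1 / 4) ^ n := by
    rw [← mul_pow, sq, pow_mul, ← mul_pow]; congr 1; ring
  rw [e]
  gcongr
  have hs : 0 ≤ ∑ n ∈ Finset.range N, (4 * A * ρ ^ n) ^ n := by positivity
  by_cases hn : n < N
  · have := Finset.single_le_sum (f := fun n => (4 * A * ρ ^ n) ^ n) (s := Finset.range N)
      (fun i _ => by positivity) (Finset.mem_range.mpr hn)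
    linarith
  · have := pow_le_one₀ (n := n) (by positivity) (hN n (by omega))
    linarith

lemma ppr_inv_bound {Q : ℂ} (h : ‖Q‖ < 1) (k : ℕ) : ‖(ppr Q k)⁻¹‖ ≤ ((1 - ‖Q‖)⁻¹) ^ k := by
  have hp : 0 < 1 - ‖Q‖ := by linarith
  rw [norm_inv, inv_pow]
  apply inv_anti₀ (by positivity)
  unfold ppr
  rw [norm_prod]
  calc (1 - ‖Q‖) ^ k = ∏ i ∈ Finset.range k, (1 - ‖Q‖) := by simp
    _ ≤ _ := by
      apply Finset.prod_le_prod
      · intros; exact hp.le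
      · intro i _
        have := norm_sub_norm_le (1 : ℂ) (Q ^ (2 * (i + 1)))
        have h2 : ‖Q ^ (2 * (i + 1))‖ ≤ ‖Q‖ := by
          rw [norm_pow]; exact pow_le_of_le_one (norm_nonneg _) h.le (by omega)
        rw [norm_one] at this
        linarith

lemma oqr_bound {Q : ℂ} (h : ‖Q‖ < 1) (k : ℕ) : ‖oqr Q k‖ ≤ 2 ^ k := by
  unfold oqr
  rw [norm_prod]
  calc _ ≤ ∏ i ∈ Finset.range k, (2 : ℝ) := by
        apply Finset.prod_le_prod
        · intros; positivity
        · intro i _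
          have := norm_sub_le (1 : ℂ) (Q ^ (2 * i + 1))
          have h2 := norm_pow_lt h (k := 2 * i + 1) (by omega)
          rw [norm_one] at this
          linarith
    _ = _ := by simp

lemma dw_bound {Q : ℂ} (h : ‖Q‖ < 1) :
    ∃ K : ℝ, 0 ≤ K ∧ ∀ n r : ℕ, ‖dwt Q n * wker Q n r‖ ≤ K * ((1 / 2) ^ n * (1 / 2) ^ r) := by
  have hp : 0 < 1 - ‖Q‖ := by linarith
  obtain ⟨K, hK, hb⟩ := quad_bound (2 * ((1 - ‖Q‖)⁻¹) ^ 2) ‖Q‖ (by positivity) (norm_nonneg _) h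
  refine ⟨K * (1 - ‖Q‖)⁻¹, by positivity, fun n r => ?_⟩
  by_cases hr : r ≤ n
  · have e : dwt Q n * wker Q n r = (-1) ^ n * Q ^ ((n + 1) ^ 2) * oqr Q n *
        ((ppr Q (n - r))⁻¹ * (ppr Q (n + r + 1))⁻¹) := by
      unfold dwt wker; rw [if_pos hr, one_div, mul_inv]
    rw [e]
    simp only [norm_mul, norm_pow, norm_neg, norm_one, one_pow, one_mul]
    have b1 := ppr_inv_bound h (n - r)
    have b2 := ppr_inv_bound h (n + r + 1)
    have b3 := oqr_bound h n
    have b4 : ‖Q‖ ^ ((n + 1) ^ 2) ≤ ‖Q‖ ^ (n ^ 2) :=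
      pow_le_pow_of_le_one (norm_nonneg _) h.le (by nlinarith)
    calc _ ≤ ‖Q‖ ^ (n ^ 2) * 2 ^ n * (((1 - ‖Q‖)⁻¹) ^ (n - r) * ((1 - ‖Q‖)⁻¹) ^ (n + r + 1)) := by
          gcongr
      _ = ((2 * ((1 - ‖Q‖)⁻¹) ^ 2) ^ n * ‖Q‖ ^ (n ^ 2)) * (1 - ‖Q‖)⁻¹ := by
          rw [← pow_add, show n - r + (n + r + 1) = 2 * n + 1 by omega, mul_pow, ← pow_mul]; ring
      _ ≤ (K * (1 / 4) ^ n) * (1 - ‖Q‖)⁻¹ := mul_le_mul_of_nonneg_right (hb n) (by positivity)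
      _ = K * (1 - ‖Q‖)⁻¹ * ((1 / 2) ^ n * (1 / 2) ^ n) := by
          rw [← mul_pow]; norm_num; ring
      _ ≤ _ := by
          have : ((1:ℝ) / 2) ^ n ≤ (1 / 2) ^ r := pow_le_pow_of_le_one (by norm_num) (by norm_num) hr
          gcongr
  · rw [wker_gt Q (by omega)]; simp; positivity

lemma half_summable : Summable fun n : ℕ => ((1:ℝ) / 2) ^ n :=
  summable_geometric_of_lt_one (by norm_num) (by norm_num)

lemma dw_summable {Q : ℂ} (h : ‖Q‖ < 1) (r : ℕ) : Summable fun n => dwt Q n * wker Q n r := by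
  obtain ⟨K, hK, hb⟩ := dw_bound h
  refine Summable.of_norm_bounded (g := fun n => K * ((1 / 2) ^ n * (1 / 2) ^ r)) ?_ (fun n => hb n r)
  exact (half_summable.mul_right _).mul_left _

/-- inner sums -/
def Ssum (Q : ℂ) (r : ℕ) : ℂ := ∑' n, dwt Q n * wker Q n r

lemma dwt_succ (Q : ℂ) (n : ℕ) :
    dwt Q (n + 1) = -Q ^ (2 * n + 3) * (1 - Q ^ (2 * n + 1)) * dwt Q n := by
  unfold dwt oqr
  rw [Finset.prod_range_succ]
  ring

lemma S_step {Q : ℂ} (h : ‖Q‖ < 1) (r : ℕ) :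
    (1 - Q ^ (2 * r + 3)) * Ssum Q (r + 1) = -Q ^ (2 * r + 3) * (1 - Q ^ (2 * r + 1)) * Ssum Q r := by
  set g : ℕ → ℂ := fun n =>
    -(1 - Q ^ (4 * r + 4)) * ((1 - Q ^ (2 * (n - r))) * (dwt Q n * wker Q n r)) with hg
  have hgs : Summable g := by
    apply Summable.mul_left
    apply Summable.of_norm
    refine Summable.of_nonneg_of_le (fun _ => norm_nonneg _) (fun n => ?_)
      ((dw_summable h r).norm.mul_left 2)
    rw [norm_mul]
    gcongr
    have := norm_sub_le (1 : ℂ) (Q ^ (2 * (n - r)))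
    have h2 : ‖Q ^ (2 * (n - r))‖ ≤ 1 := by
      rw [norm_pow]; exact pow_le_one₀ (norm_nonneg _) h.le
    rw [norm_one] at this
    linarith
  have hg0 : g 0 = 0 := by
    simp [hg]
  have hstep : ∀ n, (1 - Q ^ (2 * r + 3)) * (dwt Q n * wker Q n (r + 1)) +
      Q ^ (2 * r + 3) * (1 - Q ^ (2 * r + 1)) * (dwt Q n * wker Q n r) = g (n + 1) - g n := by
    intro n
    have hd := dwt_succ Q n
    have w1 := wker_succ_right h n r
    have w2 := wker_succ_left h n r
    have a := one_sub_ne h (k := 2 * (n + r + 2)) (by omega)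
    simp only [hg]
    by_cases hr : r ≤ n
    · obtain ⟨m, rfl⟩ := Nat.exists_eq_add_of_le hr
      have e1 : r + m - r = m := by omega
      have e2 : r + m + 1 - r = m + 1 := by omega
      rw [e1] at w1 ⊢
      rw [e2] at w2 ⊢
      rw [hd]
      apply mul_right_cancel₀ a
      generalize dwt Q (r + m) = D at *
      generalize wker Q (r + m) (r + 1) = W1 at *
      generalize wker Q (r + m + 1) r = W2 at *
      generalize wker Q (r + m) r = W at *
      linear_combination (1 - Q ^ (2 * r + 3)) * D * w1 -
        (1 - Q ^ (4 * r + 4)) * Q ^ (2 * (r + m) + 3) * (1 - Q ^ (2 * (r + m) + 1)) * D * w2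
    · rw [wker_gt Q (show n < r by omega), wker_gt Q (show n < r + 1 by omega),
        show n + 1 - r = 0 by omega]
      simp
  have h1 := (dw_summable h (r + 1)).mul_left (1 - Q ^ (2 * r + 3))
  have h2 := (dw_summable h r).mul_left (Q ^ (2 * r + 3) * (1 - Q ^ (2 * r + 1)))
  have hsum := h1.tsum_add h2
  rw [tsum_congr hstep, tsum_mul_left, tsum_mul_left,
    ((summable_nat_add_iff 1).mpr hgs).tsum_sub hgs, hgs.tsum_eq_zero_add, hg0] at hsum
  unfold Ssum
  linear_combination -hsum

lemma S_eq {Q : ℂ} (h : ‖Q‖ < 1) (r : ℕ) :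
    (1 - Q ^ (2 * r + 1)) * Ssum Q r = (-1) ^ r * Q ^ (r * (r + 2)) * ((1 - Q) * Ssum Q 0) := by
  induction r with
  | zero => simp
  | succ r ih =>
    have := S_step h r
    rw [show 2 * (r + 1) + 1 = 2 * r + 3 by ring, this, mul_assoc, ih]
    ring

lemma swap_sum {Q : ℂ} (h : ‖Q‖ < 1) (a : ℕ → ℂ) (B : ℝ) (hB : ∀ r, ‖a r‖ ≤ B) :
    ∑' n, dwt Q n * ∑ r ∈ Finset.range (n + 1), a r * wker Q n r = ∑' r, a r * Ssum Q r := by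
  obtain ⟨K, hK, hb⟩ := dw_bound h
  have hB0 : 0 ≤ B := (norm_nonneg _).trans (hB 0)
  have hs : Summable (Function.uncurry fun n r : ℕ => a r * (dwt Q n * wker Q n r)) := by
    refine Summable.of_norm_bounded (g := fun x : ℕ × ℕ => B * (K * ((1 / 2) ^ x.1 * (1 / 2) ^ x.2))) ?_ ?_
    · apply Summable.mul_left
      apply Summable.mul_left
      exact half_summable.mul_of_nonneg half_summable (fun _ => by positivity) (fun _ => by positivity)
    · rintro ⟨n, r⟩
      simp only [Function.uncurry]
      rw [norm_mul]
      have := hb n r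
      have := hB r
      gcongr
  have hc := hs.tsum_comm
  have e1 : ∀ n, dwt Q n * ∑ r ∈ Finset.range (n + 1), a r * wker Q n r =
      ∑' r, a r * (dwt Q n * wker Q n r) := by
    intro n
    rw [tsum_eq_sum (s := Finset.range (n + 1))]
    · rw [Finset.mul_sum]
      exact Finset.sum_congr rfl fun _ _ => by ring
    · intro r hr
      rw [wker_gt Q (by simpa using hr)]; simp
  rw [tsum_congr e1, ← hc]
  exact tsum_congr fun r => tsum_mul_left

lemma norm_num_bound {Q : ℂ} (h : ‖Q‖ < 1) (e k r : ℕ) :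
    ‖(-1) ^ r * Q ^ e * (1 - Q ^ k)‖ ≤ 2 := by
  simp only [norm_mul, norm_pow, norm_neg, norm_one, one_pow, one_mul]
  have h1 : ‖Q‖ ^ e ≤ 1 := pow_le_one₀ (norm_nonneg _) h.le
  have h3 : ‖Q‖ ^ k ≤ 1 := pow_le_one₀ (norm_nonneg _) h.le
  have h2 := norm_sub_le (1 : ℂ) (Q ^ k)
  rw [norm_one, norm_pow] at h2
  calc _ ≤ 1 * (2 : ℝ) := by gcongr; linarith
    _ = 2 := by norm_num

lemma u_main {Q : ℂ} (h : ‖Q‖ < 1) :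
    Q = ((1 - Q) * Ssum Q 0) * ∑' r : ℕ, Q ^ (2 * r ^ 2 + r) * (1 + Q ^ (2 * r + 1)) := by
  have := swap_sum h (uco Q) 2 (fun r => norm_num_bound h _ _ _)
  simp only [unit_sum h] at this
  rw [tsum_eq_single 0 (by intro n hn; simp [hn])] at this
  rw [← tsum_mul_left]
  calc Q = _ := by simp [dwt, oqr]
    _ = _ := this
    _ = _ := by
      refine tsum_congr fun r => ?_
      have hS := S_eq h r
      have hu : uco Q r * Ssum Q r = (-1) ^ r * Q ^ (r * (r - 1)) * (1 + Q ^ (2 * r + 1)) *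
        ((1 - Q ^ (2 * r + 1)) * Ssum Q r) := by unfold uco; ring
      rw [hu, hS]
      have e : Q ^ (2 * r ^ 2 + r) = Q ^ (r * (r - 1)) * Q ^ (r * (r + 2)) := by
        rw [← pow_add]; congr 1; cases r <;> simp; ring
      have s : (-1 : ℂ) ^ r * (-1) ^ r = 1 := by rw [← mul_pow]; simp
      rw [e]
      linear_combination (Q ^ (r * (r - 1)) * (1 + Q ^ (2 * r + 1)) * Q ^ (r * (r + 2)) *
        ((1 - Q) * Ssum Q 0)) * s

lemma v_main {Q : ℂ} (h : ‖Q‖ < 1) :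
    ∑' n : ℕ, dwt Q n / omr Q (n + 1) ^ 2 =
      ((1 - Q) * Ssum Q 0) * ∑' r : ℕ, Q ^ (2 * r ^ 2 + 3 * r) / (1 + Q ^ (2 * r + 1)) := by
  have := swap_sum h (vco Q) (2 / (1 - ‖Q‖)) (fun r => by
    unfold vco
    rw [norm_div]
    have hp : 0 < 1 - ‖Q‖ := by linarith
    gcongr
    · exact norm_num_bound h _ _ _
    · have := norm_sub_norm_le (1 : ℂ) (-Q ^ (2 * r + 1))
      have h2 : ‖Q ^ (2 * r + 1)‖ ≤ ‖Q‖ := by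
        rw [norm_pow]; exact pow_le_of_le_one (norm_nonneg _) h.le (by omega)
      rw [norm_one, norm_neg, sub_neg_eq_add] at this
      linarith)
  simp only [v_sum h] at this
  rw [← tsum_mul_left]
  calc _ = _ := tsum_congr fun n => by ring
    _ = _ := this
    _ = _ := by
      refine tsum_congr fun r => ?_
      have hS := S_eq h r
      have hu : vco Q r * Ssum Q r = (-1) ^ r * Q ^ (r * (r + 1)) / (1 + Q ^ (2 * r + 1)) *
        ((1 - Q ^ (2 * r + 1)) * Ssum Q r) := by unfold vco; ring
      rw [hu, hS]
      have e : Q ^ (2 * r ^ 2 + 3 * r) = Q ^ (r * (r + 1)) * Q ^ (r * (r + 2)) := by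
        rw [← pow_add]; congr 1; ring
      have s : (-1 : ℂ) ^ r * (-1) ^ r = 1 := by rw [← mul_pow]; simp
      rw [e]
      linear_combination (Q ^ (r * (r + 1)) / (1 + Q ^ (2 * r + 1)) * Q ^ (r * (r + 2)) *
        ((1 - Q) * Ssum Q 0)) * s

lemma nome_norm {τ : ℂ} (hτ : 0 < τ.im) : ‖nome τ‖ < 1 := by
  unfold nome
  rw [Complex.norm_exp, Real.exp_lt_one_iff]
  simp
  positivity

lemma Mser_eq (x : ℂ) :
    Mser x = -(x⁻¹ * ∑' n : ℕ, dwt (x ^ 8) n / omr (x ^ 8) (n + 1) ^ 2) := by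
  unfold Mser
  rw [← mul_neg, ← tsum_neg]
  congr 1
  refine tsum_congr fun n => ?_
  unfold dwt oqr omr
  have e1 : ∀ k, x ^ (16 * (k + 1) - 8) = (x ^ 8) ^ (2 * k + 1) := by
    intro k; rw [← pow_mul]; congr 1; omega
  simp only [e1, Finset.prod_pow]
  rw [← pow_mul]
  ring

lemma lt_summable {Q : ℂ} (h : ‖Q‖ < 1) :
    Summable fun r : ℕ => Q ^ (2 * r ^ 2 + 3 * r) / (1 + Q ^ (2 * r + 1)) := by
  have hp : 0 < 1 - ‖Q‖ := by linarith
  refine Summable.of_norm_bounded (g := fun r : ℕ => ‖Q‖ ^ r * (1 - ‖Q‖)⁻¹) 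
    ((summable_geometric_of_lt_one (norm_nonneg _) h).mul_right _) fun r => ?_
  rw [norm_div, norm_pow, div_eq_mul_inv]
  gcongr ?_ * ?_
  · exact pow_le_pow_of_le_one (norm_nonneg _) h.le (by nlinarith)
  · apply inv_anti₀ hp
    have := norm_sub_norm_le (1 : ℂ) (-Q ^ (2 * r + 1))
    have h2 : ‖Q ^ (2 * r + 1)‖ ≤ ‖Q‖ := by
      rw [norm_pow]; exact pow_le_of_le_one (norm_nonneg _) h.le (by omega)
    rw [norm_one, norm_neg, sub_neg_eq_add] at this
    linarith

lemma Theta2_eq {τ : ℂ} (hτ : 0 < τ.im) : Theta2 τ =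
    nome τ * ∑' r : ℕ, (nome τ ^ 8) ^ (2 * r ^ 2 + r) * (1 + (nome τ ^ 8) ^ (2 * r + 1)) := by
  have h := nome_norm hτ
  unfold Theta2
  generalize nome τ = x at *
  have hs : Summable fun n : ℕ => x ^ ((2 * n + 1) ^ 2) := by
    refine Summable.of_norm_bounded (g := fun r : ℕ => ‖x‖ ^ r)
      (summable_geometric_of_lt_one (norm_nonneg _) h) fun r => ?_
    rw [norm_pow]
    exact pow_le_pow_of_le_one (norm_nonneg _) h.le (by nlinarith)
  have he : Summable fun n : ℕ => x ^ ((2 * (2 * n) + 1) ^ 2) :=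
    hs.comp_injective (i := fun n => 2 * n) (fun a b hab => by simpa using hab)
  have ho : Summable fun n : ℕ => x ^ ((2 * (2 * n + 1) + 1) ^ 2) :=
    hs.comp_injective (i := fun n => 2 * n + 1) (fun a b hab => by simpa using hab)
  rw [← tsum_even_add_odd (f := fun n : ℕ => x ^ ((2 * n + 1) ^ 2)) he ho, ← he.tsum_add ho,
    ← tsum_mul_left]
  refine tsum_congr fun r => ?_
  rw [← pow_mul, ← pow_mul]
  ring

lemma int_sum {x : ℂ} (hx : x ≠ 0) (h : ‖x‖ < 1) :
    ∑' n : ℤ, x ^ (16 * n ^ 2 - 8 * n : ℤ) / (1 + x ^ (16 * n - 8 : ℤ)) =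
      2 * (x ^ 8 * ∑' r : ℕ, (x ^ 8) ^ (2 * r ^ 2 + 3 * r) / (1 + (x ^ 8) ^ (2 * r + 1))) := by
  have h8 : ‖x ^ 8‖ < 1 := norm_pow_lt h (by omega)
  set f : ℤ → ℂ := fun n => x ^ (16 * n ^ 2 - 8 * n : ℤ) / (1 + x ^ (16 * n - 8 : ℤ)) with hf
  set c : ℕ → ℂ := fun r => x ^ 8 * ((x ^ 8) ^ (2 * r ^ 2 + 3 * r) / (1 + (x ^ 8) ^ (2 * r + 1)))
    with hc
  have hcs : HasSum c (∑' r, c r) := ((lt_summable h8).mul_left _).hasSum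
  have p1 : ∀ n : ℕ, f (n + 1) = c n := by
    intro n
    simp only [hf, hc]
    rw [← pow_mul, ← pow_mul, ← mul_div_assoc, ← pow_add, ← zpow_natCast, ← zpow_natCast]
    congr 2
    · push_cast; ring
    · congr 1; push_cast; ring
  have p2 : ∀ n : ℕ, f (-((n : ℤ) + 1) + 1) = c n := by
    intro n
    rw [← p1]
    simp only [hf]
    have key : ∀ a b d : ℤ, a = b + d → x ^ a / (1 + x ^ d) = x ^ b / (1 + x ^ (-d)) := by
      intro a b d hab
      rw [hab, zpow_add₀ hx, zpow_neg]
      have hd : x ^ d ≠ 0 := zpow_ne_zero _ hx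
      have : 1 + (x ^ d)⁻¹ = (1 + x ^ d) / x ^ d := by field_simp; ring
      rw [this, div_div_eq_mul_div]
    rw [key (16 * ((n:ℤ) + 1) ^ 2 - 8 * (n + 1)) (16 * (-((n : ℤ) + 1) + 1) ^ 2 - 8 * (-((n : ℤ) + 1) + 1))
      (16 * ((n:ℤ) + 1) - 8) (by ring)]
    congr 3
    ring
  have hz : HasSum (fun n : ℤ => f (n + 1)) (∑' r, c r + ∑' r, c r) := by
    apply HasSum.of_nat_of_neg_add_one
    · simpa only [p1] using hcs
    · simpa only [p2] using hcs
  have := ((Equiv.addRight (1 : ℤ)).hasSum_iff (f := f)).mp hz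
  rw [this.tsum_eq, ← tsum_mul_left]
  ring

/-- For `τ ∈ ℍ`: `M(q) = −(1/(2Θ₂(τ))) Σ_{n∈ℤ} q^{16n²−8n}/(1+q^{16n−8})`. -/
theorem stmt3 (τ : ℂ) (hτ : 0 < τ.im) :
    Mser (nome τ) =
      -(1 / (2 * Theta2 τ)) *
        ∑' n : ℤ, nome τ ^ (16 * n ^ 2 - 8 * n : ℤ) / (1 + nome τ ^ (16 * n - 8 : ℤ)) := by
  have h := nome_norm hτ
  have hx : nome τ ≠ 0 := Complex.exp_ne_zero _
  have h8 : ‖nome τ ^ 8‖ < 1 := norm_pow_lt h (by omega)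
  rw [Mser_eq, int_sum hx h, Theta2_eq hτ, v_main h8]
  have hu := u_main h8
  have hx8 : nome τ ^ 8 ≠ 0 := pow_ne_zero _ hx
  set P := ∑' r : ℕ, (nome τ ^ 8) ^ (2 * r ^ 2 + r) * (1 + (nome τ ^ 8) ^ (2 * r + 1))
  have hP : P ≠ 0 := by
    intro h0
    rw [h0, mul_zero] at hu
    exact hx8 hu
  generalize (1 - nome τ ^ 8) * Ssum (nome τ ^ 8) 0 = C at *
  generalize ∑' r : ℕ, (nome τ ^ 8) ^ (2 * r ^ 2 + 3 * r) / (1 + (nome τ ^ 8) ^ (2 * r + 1)) = L at *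
  generalize nome τ = x at *
  field_simp
  linear_combination L * hu
end
end

section
/- For every τ in the complex upper half-plane ℍ, one has (q·d/dq)[ (16·Θ₂(τ)⁴ + Θ₃(τ)⁴) / (Θ₂(τ)²·Θ₃(τ)²) ] = −2·Θ₄(τ)⁸ / (Θ₂(τ)²·Θ₃(τ)²). (This is the rescaled form of the identity q·du/dq = −ϑ₄⁸/(8ϑ₂²ϑ₃²) for u = (ϑ₂⁴+ϑ₃⁴)/(2ϑ₂²ϑ₃²) used in evaluating the u-plane integral.) -/
noncomputable section
open Complex Real

/-- `Θ₃(τ) = 1 + 2 Σ_{n≥1} q^{4n²}`. -/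
def Theta3 (τ : ℂ) : ℂ := 1 + 2 * ∑' n : ℕ, nome τ ^ (4 * (n + 1) ^ 2)

/-- `Θ₄(τ) = 1 + 2 Σ_{n≥1} (−1)ⁿ q^{4n²}`. -/
def Theta4 (τ : ℂ) : ℂ := 1 + 2 * ∑' n : ℕ, (-1 : ℂ) ^ (n + 1) * nome τ ^ (4 * (n + 1) ^ 2)


/-! ### Theta series in the variable `y = q^4` -/

def thA (y : ℂ) : ℂ := ∑' n : ℤ, y ^ (n.natAbs ^ 2)
def thB (y : ℂ) : ℂ := ∑' n : ℕ, y ^ (n ^ 2 + n)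

lemma sumN (y : ℝ) (h0 : 0 ≤ y) (hy : y < 1) (e : ℕ → ℕ) (he : ∀ n, n ≤ e n) :
    Summable (fun n => y ^ e n) := by
  refine Summable.of_nonneg_of_le (fun n => by positivity) (fun n => ?_)
    (summable_geometric_of_lt_one h0 hy)
  exact pow_le_pow_of_le_one h0 hy.le (he n)

lemma sumZ (y : ℝ) (h0 : 0 ≤ y) (hy : y < 1) (e : ℤ → ℕ) (he : ∀ n, n.natAbs ≤ e n + 1) :
    Summable (fun n => y ^ e n) := by
  have key : Summable (fun n : ℤ => y ^ (n.natAbs - 1)) := by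
    apply Summable.of_nat_of_neg_add_one
    · rw [← summable_nat_add_iff 1]
      exact (summable_geometric_of_lt_one h0 hy).congr (fun n => by congr 1)
    · exact (summable_geometric_of_lt_one h0 hy).congr (fun n => by
        have : (-((n : ℤ) + 1)).natAbs - 1 = n := by omega
        rw [this])
  refine Summable.of_nonneg_of_le (fun n => by positivity) (fun n => ?_) key
  exact pow_le_pow_of_le_one h0 hy.le (by have := he n; omega)

lemma sumZn (y : ℂ) (hy : ‖y‖ < 1) (e : ℤ → ℕ) (he : ∀ n, n.natAbs ≤ e n + 1) :
    Summable (fun n => ‖y ^ e n‖) := by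
  simpa using sumZ ‖y‖ (norm_nonneg _) hy e he

lemma sumNn (y : ℂ) (hy : ‖y‖ < 1) (e : ℕ → ℕ) (he : ∀ n, n ≤ e n) :
    Summable (fun n => ‖y ^ e n‖) := by
  simpa using sumN ‖y‖ (norm_nonneg _) hy e he

lemma diff_aux {ι : Type} (e : ι → ℕ) (hs : ∀ r : ℝ, 0 ≤ r → r < 1 → Summable (fun n => r ^ e n))
    (y : ℂ) (hy : ‖y‖ < 1) : AnalyticAt ℂ (fun y : ℂ => ∑' n, y ^ e n) y := by
  obtain ⟨r, hr1, hr2⟩ := exists_between hy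
  have h0 : 0 ≤ r := (norm_nonneg _).trans hr1.le
  have := Complex.differentiableOn_tsum_of_summable_norm (U := Metric.ball (0:ℂ) r)
    (F := fun n (y : ℂ) => y ^ e n) (hs r h0 hr2) (fun i => by fun_prop) Metric.isOpen_ball
    (fun i w hw => by
      rw [norm_pow]
      have : ‖w‖ < r := by simpa using hw
      gcongr)
  exact this.analyticAt (Metric.isOpen_ball.mem_nhds (by simpa using hr1))

lemma anA (y : ℂ) (hy : ‖y‖ < 1) : AnalyticAt ℂ thA y :=
  diff_aux (fun n : ℤ => n.natAbs ^ 2)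
    (fun r h0 h1 => sumZ r h0 h1 _ (fun n => by nlinarith)) y hy

lemma anB (y : ℂ) (hy : ‖y‖ < 1) : AnalyticAt ℂ thB y :=
  diff_aux (fun n : ℕ => n ^ 2 + n)
    (fun r h0 h1 => sumN r h0 h1 _ (fun n => by nlinarith)) y hy

lemma thA_zero : thA 0 = 1 := by
  unfold thA
  rw [tsum_eq_single 0]
  · simp
  · intro b hb
    simp [hb]

lemma thB_zero : thB 0 = 1 := by
  unfold thB
  rw [tsum_eq_single 0]
  · simp
  · intro b hb
    simp [hb]

/-- sum over odd integers -/
lemma odd_sum (y : ℂ) (hy : ‖y‖ < 1) :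
    ∑' n : ℤ, y ^ ((2 * n + 1).natAbs ^ 2) = 2 * y * thB (y ^ 4) := by
  have e1 : ∀ n : ℕ, y ^ ((2 * (n : ℤ) + 1).natAbs ^ 2) = y * (y ^ 4) ^ (n ^ 2 + n) := by
    intro n
    have : (2 * (n : ℤ) + 1).natAbs = 2 * n + 1 := by omega
    rw [this, ← pow_mul, ← pow_succ']
    congr 1; ring
  have e2 : ∀ n : ℕ, y ^ ((2 * (-((n : ℤ) + 1)) + 1).natAbs ^ 2) = y * (y ^ 4) ^ (n ^ 2 + n) := by
    intro n
    have : (2 * (-((n : ℤ) + 1)) + 1).natAbs = 2 * n + 1 := by omega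
    rw [this, ← pow_mul, ← pow_succ']
    congr 1; ring
  have hs : Summable (fun n : ℕ => y * (y ^ 4) ^ (n ^ 2 + n)) := by
    refine Summable.mul_left _ (Summable.of_norm (sumNn (y ^ 4) ?_ _ (fun n => by nlinarith)))
    rw [norm_pow]; exact pow_lt_one₀ (norm_nonneg _) hy (by norm_num)
  rw [tsum_of_nat_of_neg_add_one (hs.congr fun n => (e1 n).symm) (hs.congr fun n => (e2 n).symm)]
  simp_rw [e1, e2, tsum_mul_left]
  unfold thB; ring

def parFun : ℤ ⊕ ℤ → ℤ := Sum.elim (fun n => 2 * n) (fun n => 2 * n + 1)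

lemma parFun_bij : Function.Bijective parFun := by
  constructor
  · rintro (a | a) (b | b) h <;> simp only [parFun, Sum.elim_inl, Sum.elim_inr] at h
    · have : a = b := by omega
      rw [this]
    · omega
    · omega
    · have : a = b := by omega
      rw [this]
  · intro n
    rcases Int.even_or_odd n with ⟨a, ha⟩ | ⟨a, ha⟩
    · exact ⟨.inl a, by simp only [parFun, Sum.elim_inl]; omega⟩
    · exact ⟨.inr a, by simp only [parFun, Sum.elim_inr]; omega⟩

lemma A_split (y : ℂ) (hy : ‖y‖ < 1) : thA y = thA (y ^ 4) + 2 * y * thB (y ^ 4) := by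
  rw [← odd_sum y hy]
  have h4 : ‖y ^ 4‖ < 1 := by
    rw [norm_pow]; exact pow_lt_one₀ (norm_nonneg _) hy (by norm_num)
  have s4 := (sumZn (y ^ 4) h4 (fun n : ℤ => n.natAbs ^ 2) (fun n => by nlinarith)).of_norm
  have so := (sumZn y hy (fun n : ℤ => (2 * n + 1).natAbs ^ 2) (fun n => by
    have : n.natAbs ≤ (2 * n + 1).natAbs := by omega
    nlinarith)).of_norm
  unfold thA
  rw [← (Equiv.ofBijective parFun parFun_bij).tsum_eq]
  have e1 : ∀ n : ℤ, y ^ ((parFun (.inl n)).natAbs ^ 2) = (y ^ 4) ^ (n.natAbs ^ 2) := by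
    intro n
    have : (2 * n).natAbs = 2 * n.natAbs := by omega
    simp only [parFun, Sum.elim_inl, ← pow_mul, this]
    congr 1; ring
  have e2 : ∀ n : ℤ, y ^ ((parFun (.inr n)).natAbs ^ 2) = y ^ ((2 * n + 1).natAbs ^ 2) := by
    intro n
    simp only [parFun, Sum.elim_inr]
  rw [Summable.tsum_sum]
  · simp only [Equiv.ofBijective_apply, e1, e2]
  · exact s4.congr fun p => (e1 p).symm
  · exact so.congr fun p => (e2 p).symm

def latFun : (ℤ × ℤ) ⊕ (ℤ × ℤ) → ℤ × ℤ :=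
  Sum.elim (fun p => (p.1 + p.2, p.1 - p.2)) (fun p => (p.1 + p.2 + 1, p.1 - p.2))

lemma latFun_bij : Function.Bijective latFun := by
  constructor
  · rintro (⟨a, b⟩ | ⟨a, b⟩) (⟨c, d⟩ | ⟨c, d⟩) h <;>
    simp only [latFun, Sum.elim_inl, Sum.elim_inr, Prod.mk.injEq] at h
    · have h1 : a = c := by omega
      have h2 : b = d := by omega
      rw [h1, h2]
    · omega
    · omega
    · have h1 : a = c := by omega
      have h2 : b = d := by omega
      rw [h1, h2]
  · rintro ⟨m, n⟩
    rcases Int.even_or_odd (m + n) with ⟨a, ha⟩ | ⟨a, ha⟩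
    · exact ⟨.inl (a, a - n), by simp only [latFun, Sum.elim_inl, Prod.mk.injEq]; omega⟩
    · exact ⟨.inr (a, a - n), by simp only [latFun, Sum.elim_inr, Prod.mk.injEq]; omega⟩

lemma A_sq_aux (w : ℂ) (hw : ‖w‖ < 1) :
    thA (w ^ 2) ^ 2 = thA (w ^ 4) ^ 2 + (2 * w * thB (w ^ 4)) ^ 2 := by
  have h2 : ‖w ^ 2‖ < 1 := by
    rw [norm_pow]; exact pow_lt_one₀ (norm_nonneg _) hw (by norm_num)
  have h4 : ‖w ^ 4‖ < 1 := by
    rw [norm_pow]; exact pow_lt_one₀ (norm_nonneg _) hw (by norm_num)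
  have s2 := sumZn (w ^ 2) h2 (fun n : ℤ => n.natAbs ^ 2) (fun n => by nlinarith)
  have s4 := sumZn (w ^ 4) h4 (fun n : ℤ => n.natAbs ^ 2) (fun n => by nlinarith)
  have so := sumZn w hw (fun n : ℤ => (2 * n + 1).natAbs ^ 2) (fun n => by
    have : n.natAbs ≤ (2 * n + 1).natAbs := by omega
    nlinarith)
  rw [← odd_sum w hw]
  unfold thA
  rw [sq (∑' n : ℤ, (w ^ 2) ^ (n.natAbs ^ 2)), sq (∑' n : ℤ, (w ^ 4) ^ (n.natAbs ^ 2)),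
    sq (∑' n : ℤ, w ^ ((2 * n + 1).natAbs ^ 2)), tsum_mul_tsum_of_summable_norm s2 s2, tsum_mul_tsum_of_summable_norm s4 s4,
    tsum_mul_tsum_of_summable_norm so so]
  rw [← (Equiv.ofBijective latFun latFun_bij).tsum_eq]
  have e1 : ∀ p : ℤ × ℤ, (w ^ 2) ^ ((latFun (.inl p)).1.natAbs ^ 2) *
      (w ^ 2) ^ ((latFun (.inl p)).2.natAbs ^ 2) =
      (w ^ 4) ^ (p.1.natAbs ^ 2) * (w ^ 4) ^ (p.2.natAbs ^ 2) := by
    rintro ⟨a, b⟩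
    simp only [latFun, Sum.elim_inl, ← pow_mul, ← pow_add]
    congr 1
    zify
    simp only [sq_abs]
    ring
  have e2 : ∀ p : ℤ × ℤ, (w ^ 2) ^ ((latFun (.inr p)).1.natAbs ^ 2) *
      (w ^ 2) ^ ((latFun (.inr p)).2.natAbs ^ 2) =
      w ^ ((2 * p.1 + 1).natAbs ^ 2) * w ^ ((2 * p.2 + 1).natAbs ^ 2) := by
    rintro ⟨a, b⟩
    simp only [latFun, Sum.elim_inr, ← pow_mul, ← pow_add]
    congr 1
    zify
    simp only [sq_abs]
    ring
  have S1 := summable_mul_of_summable_norm s4 s4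
  have S2 := summable_mul_of_summable_norm so so
  rw [Summable.tsum_sum]
  · simp only [Equiv.ofBijective_apply, e1, e2]
  · exact S1.congr fun p => (e1 p).symm
  · exact S2.congr fun p => (e2 p).symm

lemma nlt {y : ℂ} (hy : ‖y‖ < 1) (n : ℕ) (hn : n ≠ 0) : ‖y ^ n‖ < 1 := by
  rw [norm_pow]; exact pow_lt_one₀ (norm_nonneg _) hy hn

lemma exists_root (y : ℂ) (hy : ‖y‖ < 1) : ∃ w : ℂ, w ^ 2 = y ∧ ‖w‖ < 1 := by
  obtain ⟨w, hw⟩ := IsAlgClosed.exists_pow_nat_eq y (n := 2) (by norm_num)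
  refine ⟨w, hw, ?_⟩
  rw [← hw, norm_pow] at hy
  exact (pow_lt_one_iff_of_nonneg (norm_nonneg _) (by norm_num)).mp hy

/-- duplication formula for the square -/
lemma A_sq (y : ℂ) (hy : ‖y‖ < 1) : thA y ^ 2 = thA (y ^ 2) ^ 2 + 4 * y * thB (y ^ 2) ^ 2 := by
  obtain ⟨w, rfl, hw⟩ := exists_root y hy
  rw [A_sq_aux w hw, ← pow_mul]
  ring

lemma A_neg_sq (y : ℂ) (hy : ‖y‖ < 1) :
    thA (-y) ^ 2 = thA (y ^ 2) ^ 2 - 4 * y * thB (y ^ 2) ^ 2 := by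
  have := A_sq (-y) (by simpa using hy)
  rw [this, neg_sq]; ring

lemma A_neg_split (y : ℂ) (hy : ‖y‖ < 1) : thA (-y) = thA (y ^ 4) - 2 * y * thB (y ^ 4) := by
  have := A_split (-y) (by simpa using hy)
  rw [this, show (-y) ^ 4 = y ^ 4 by ring]; ring

/-- (b) -/
lemma B_sq (y : ℂ) (hy : ‖y‖ < 1) : thB y ^ 2 = thA (y ^ 2) * thB (y ^ 2) := by
  by_cases h0 : y = 0
  · subst h0; simp [thA_zero, thB_zero]
  obtain ⟨w, rfl, hw⟩ := exists_root y hy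
  have hw0 : w ≠ 0 := by rintro rfl; simp at h0
  have h1 := A_sq w hw
  have h2 := A_sq (w ^ 2) hy
  have h3 := A_split w hw
  rw [← pow_mul] at h2 ⊢
  norm_num at h2 ⊢
  rw [h3, h2] at h1
  have : 4 * w * (thB (w ^ 2) ^ 2) = 4 * w * (thA (w ^ 4) * thB (w ^ 4)) := by
    linear_combination -h1
  exact mul_left_cancel₀ (by simpa using hw0) this

/-- (c) -/
lemma A_mul_neg (y : ℂ) (hy : ‖y‖ < 1) : thA y * thA (-y) = thA (-y ^ 2) ^ 2 := by
  rw [A_neg_sq _ (nlt hy 2 (by norm_num)), A_split y hy, A_neg_split y hy, ← pow_mul]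
  ring

lemma quartic (y : ℂ) (hy : ‖y‖ < 1) : thA y ^ 4 - thA (-y) ^ 4 = 16 * y * thB y ^ 4 := by
  have h1 := A_sq y hy
  have h2 := A_neg_sq y hy
  have h3 := B_sq y hy
  calc thA y ^ 4 - thA (-y) ^ 4 = (thA y ^ 2) ^ 2 - (thA (-y) ^ 2) ^ 2 := by ring
    _ = 16 * y * (thA (y ^ 2) * thB (y ^ 2)) ^ 2 := by rw [h1, h2]; ring
    _ = _ := by rw [← h3]; ring

lemma tendsto_pows (y : ℂ) (hy : ‖y‖ < 1) :
    Filter.Tendsto (fun n : ℕ => y ^ (2 ^ n)) Filter.atTop (nhds 0) :=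
  (tendsto_pow_atTop_nhds_zero_of_norm_lt_one hy).comp
    (tendsto_pow_atTop_atTop_of_one_lt (by norm_num))

/-- nonvanishing -/
lemma A_ne_zero (y : ℂ) (hy : ‖y‖ < 1) : thA y ≠ 0 := by
  intro h
  have step : ∀ z : ℂ, ‖z‖ < 1 → (thA z = 0 ∨ thA (-z) = 0) → thA (-z ^ 2) = 0 := by
    intro z hz h
    have := A_mul_neg z hz
    have h0 : thA z * thA (-z) = 0 := by rcases h with h | h <;> simp [h]
    rw [h0] at this
    exact pow_eq_zero_iff (by norm_num) |>.mp this.symm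
  have all : ∀ n : ℕ, thA (-y ^ (2 ^ (n + 1))) = 0 := by
    intro n
    induction n with
    | zero => simpa using step y hy (Or.inl h)
    | succ n ih =>
      have := step (y ^ (2 ^ (n + 1))) (nlt hy _ (by positivity)) (Or.inr ih)
      rwa [← pow_mul, ← pow_succ] at this
  have t := ((tendsto_pows y hy).comp (Filter.tendsto_add_atTop_nat 1)).neg
  rw [neg_zero] at t
  have c : Filter.Tendsto thA (nhds 0) (nhds (thA 0)) := (anA 0 (by simp)).continuousAt
  have t2 := c.comp t
  have t3 : (thA ∘ fun x => -((fun n : ℕ => y ^ 2 ^ n) ∘ fun a => a + 1) x) = fun _ => 0 := by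
    ext n; exact all n
  rw [t3, thA_zero] at t2
  exact zero_ne_one (tendsto_nhds_unique tendsto_const_nhds t2)

lemma B_ne_zero (y : ℂ) (hy : ‖y‖ < 1) : thB y ≠ 0 := by
  intro h
  have all : ∀ n : ℕ, thB (y ^ (2 ^ n)) = 0 := by
    intro n
    induction n with
    | zero => simpa using h
    | succ n ih =>
      have := B_sq (y ^ (2 ^ n)) (nlt hy _ (by positivity))
      rw [ih, ← pow_mul, ← pow_succ] at this
      have hA := A_ne_zero (y ^ (2 ^ (n + 1))) (nlt hy _ (by positivity))
      simpa [hA] using this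
  have c : Filter.Tendsto thB (nhds 0) (nhds (thB 0)) := (anB 0 (by simp)).continuousAt
  have t2 := c.comp (tendsto_pows y hy)
  have t3 : (thB ∘ fun n : ℕ => y ^ 2 ^ n) = fun _ => 0 := by
    ext n; exact all n
  rw [t3, thB_zero] at t2
  exact zero_ne_one (tendsto_nhds_unique tendsto_const_nhds t2)

/-! ### Logarithmic derivatives -/

lemma dA (y : ℂ) (hy : ‖y‖ < 1) : HasDerivAt thA (deriv thA y) y :=
  (anA y hy).differentiableAt.hasDerivAt
lemma dB (y : ℂ) (hy : ‖y‖ < 1) : HasDerivAt thB (deriv thB y) y :=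
  (anB y hy).differentiableAt.hasDerivAt

lemma near (y : ℂ) (hy : ‖y‖ < 1) : ∀ᶠ z in nhds y, ‖z‖ < 1 :=
  (continuous_norm.tendsto y).eventually_lt_const hy

lemma dpow (f f' : ℂ → ℂ) (y : ℂ) (n : ℕ) (h : HasDerivAt f (f' (y ^ n)) (y ^ n)) :
    HasDerivAt (fun z => f (z ^ n)) (f' (y ^ n) * (n * y ^ (n - 1))) y :=
  h.comp y (hasDerivAt_pow n y)

lemma deriv_B_sq (y : ℂ) (hy : ‖y‖ < 1) :
    2 * thB y * deriv thB y =
      2 * y * (deriv thA (y ^ 2) * thB (y ^ 2) + thA (y ^ 2) * deriv thB (y ^ 2)) := by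
  have h2 := nlt hy 2 (by norm_num)
  have l := (dB y hy).pow 2
  have r := (dpow thA (deriv thA) y 2 (dA _ h2)).mul (dpow thB (deriv thB) y 2 (dB _ h2))
  have e : (fun z => thA (z ^ 2) * thB (z ^ 2)) =ᶠ[nhds y] (fun z => thB z ^ 2) := by
    filter_upwards [near y hy] with z hz
    exact (B_sq z hz).symm
  have := l.unique (r.congr_of_eventuallyEq e.symm)
  norm_num at this
  linear_combination this

lemma deriv_A_mul_neg (y : ℂ) (hy : ‖y‖ < 1) :
    deriv thA y * thA (-y) - thA y * deriv thA (-y) =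
      - 4 * y * thA (-y ^ 2) * deriv thA (-y ^ 2) := by
  have h2 := nlt hy 2 (by norm_num)
  have l := (dA y hy).mul ((dA (-y) (by simpa using hy)).comp y (hasDerivAt_neg y))
  have r := (((dA (-y ^ 2) (by simpa using h2)).comp y (hasDerivAt_pow 2 y).neg)).pow 2
  have e : (fun z => thA z * thA (-z)) =ᶠ[nhds y] (fun z => thA (-z ^ 2) ^ 2) := by
    filter_upwards [near y hy] with z hz
    exact A_mul_neg z hz
  have := l.unique (r.congr_of_eventuallyEq e)
  simp [Function.comp] at this
  linear_combination this

lemma deriv_A_split (y : ℂ) (hy : ‖y‖ < 1) :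
    deriv thA y = 4 * y ^ 3 * deriv thA (y ^ 4) + 2 * thB (y ^ 4)
      + 8 * y ^ 4 * deriv thB (y ^ 4) := by
  have h4 := nlt hy 4 (by norm_num)
  have r := (dpow thA (deriv thA) y 4 (dA _ h4)).add
    (((hasDerivAt_id y).const_mul 2).mul (dpow thB (deriv thB) y 4 (dB _ h4)))
  have e : thA =ᶠ[nhds y] (fun z => thA (z ^ 4) + 2 * z * thB (z ^ 4)) := by
    filter_upwards [near y hy] with z hz
    exact A_split z hz
  have := (dA y hy).unique (r.congr_of_eventuallyEq e)
  norm_num at this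
  linear_combination this

def fnF (y : ℂ) : ℂ :=
  1 + 4 * (y * deriv thB y / thB y) - 4 * (y * deriv thA y / thA y) - thA (-y) ^ 4

def fnK (y : ℂ) : ℂ :=
  4 * (y * deriv thA y / thA y) - 4 * (-y * deriv thA (-y) / thA (-y)) - 16 * y * thB y ^ 4

lemma nneg {y : ℂ} (hy : ‖y‖ < 1) : ‖-y‖ < 1 := by simpa using hy

lemma b_rel (y : ℂ) (hy : ‖y‖ < 1) :
    y * deriv thB y / thB y =
      y ^ 2 * deriv thA (y ^ 2) / thA (y ^ 2) + y ^ 2 * deriv thB (y ^ 2) / thB (y ^ 2) := by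
  have h2 := nlt hy 2 (by norm_num)
  have n1 := B_ne_zero y hy
  have n2 := B_ne_zero _ h2
  have n3 := A_ne_zero _ h2
  have h := deriv_B_sq y hy
  have e := B_sq y hy
  have l : y * deriv thB y / thB y = (2 * thB y * deriv thB y) * y / (2 * thB y ^ 2) := by
    field_simp
  rw [l, h, e]
  field_simp

lemma a_rel (y : ℂ) (hy : ‖y‖ < 1) :
    y * deriv thA y / thA y + -y * deriv thA (-y) / thA (-y) =
      4 * (-y ^ 2 * deriv thA (-y ^ 2) / thA (-y ^ 2)) := by
  have h2 := nlt hy 2 (by norm_num)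
  have n1 := A_ne_zero y hy
  have n2 := A_ne_zero _ (nneg hy)
  have n3 := A_ne_zero _ (nneg h2)
  have h := deriv_A_mul_neg y hy
  have e := A_mul_neg y hy
  have l : y * deriv thA y / thA y + -y * deriv thA (-y) / thA (-y) =
      y * (deriv thA y * thA (-y) - thA y * deriv thA (-y)) / (thA y * thA (-y)) := by
    field_simp
    ring
  rw [l, h, e]
  field_simp

lemma F_rel (y : ℂ) (hy : ‖y‖ < 1) :
    fnF y = fnF (y ^ 2) + 2 * fnK (y ^ 2) - fnK y / 2 := by
  have h2 := nlt hy 2 (by norm_num)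
  have h1 := b_rel y hy
  have h3 := a_rel y hy
  have e1 := A_mul_neg y hy
  have e2 := A_sq y hy
  have e3 := A_neg_sq y hy
  have e4 := quartic y hy
  have key : thA (-y) ^ 4 + 8 * y * thB y ^ 4 =
      thA (-y ^ 2) ^ 4 + 32 * y ^ 2 * thB (y ^ 2) ^ 4 := by
    have a1 : thA (-y ^ 2) ^ 4 = thA y ^ 2 * thA (-y) ^ 2 := by
      linear_combination -(thA y * thA (-y) + thA (-y ^ 2) ^ 2) * e1
    have a2 : 8 * y * thB (y ^ 2) ^ 2 = thA y ^ 2 - thA (-y) ^ 2 := by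
      linear_combination e3 - e2
    have a3 : 32 * y ^ 2 * thB (y ^ 2) ^ 4 = (thA y ^ 2 - thA (-y) ^ 2) ^ 2 / 2 := by
      rw [← a2]; ring
    rw [a1, a3]
    linear_combination -e4 / 2
  unfold fnF fnK
  linear_combination 4 * h1 - 2 * h3 - key

lemma K_rel (y : ℂ) (hy : ‖y‖ < 1) :
    fnK y = 16 * y * fnF (y ^ 4) * (thB (y ^ 2) ^ 2 / thA (-y ^ 2) ^ 2) := by
  have h2 := nlt hy 2 (by norm_num)
  have h4 := nlt hy 4 (by norm_num)
  have n1 := A_ne_zero y hy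
  have n2 := A_ne_zero _ (nneg hy)
  have n3 := A_ne_zero _ h4
  have n4 := B_ne_zero _ h4
  have s1 := A_split y hy
  have s2 := A_neg_split y hy
  have d1 := deriv_A_split y hy
  have d2 := deriv_A_split (-y) (nneg hy)
  have e1 := A_mul_neg y hy
  have e2 := A_mul_neg (y ^ 2) h2
  have e3 := B_sq y hy
  have e4 := B_sq (y ^ 2) h2
  rw [show (-y) ^ 4 = y ^ 4 by ring] at d2
  rw [show (y ^ 2) ^ 2 = y ^ 4 by ring] at e2 e4
  have f1 : thB y ^ 4 = thA (y ^ 2) ^ 2 * (thA (y ^ 4) * thB (y ^ 4)) := by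
    rw [← e4, show thB y ^ 4 = (thB y ^ 2) ^ 2 by ring, e3]; ring
  have f2 : thA (-y ^ 4) ^ 4 = thA (y ^ 2) ^ 2 * (thA y * thA (-y)) := by
    rw [e1, show thA (-y ^ 4) ^ 4 = (thA (-y ^ 4) ^ 2) ^ 2 by ring, ← e2]; ring
  unfold fnK fnF
  rw [f1, f2, e4, ← e1, d1, d2]
  generalize thA y = X at *
  generalize thA (-y) = Y at *
  generalize thA (y ^ 4) = P at *
  generalize thB (y ^ 4) = Q at *
  generalize deriv thA (y ^ 4) = P' at *
  generalize deriv thB (y ^ 4) = Q' at *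
  generalize thA (y ^ 2) = Z at *
  field_simp
  rw [s1, s2]
  ring

lemma F_zero : fnF 0 = 0 := by simp [fnF, thA_zero]

lemma F_rel' (y : ℂ) (hy : ‖y‖ < 1) :
    fnF y = fnF (y ^ 2) + 32 * y ^ 2 * fnF (y ^ 8) * (thB (y ^ 4) ^ 2 / thA (-y ^ 4) ^ 2)
      - 8 * y * fnF (y ^ 4) * (thB (y ^ 2) ^ 2 / thA (-y ^ 2) ^ 2) := by
  have h := F_rel y hy
  rw [K_rel y hy, K_rel _ (nlt hy 2 (by norm_num)), ← pow_mul, ← pow_mul] at h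
  rw [h]; norm_num; ring

lemma F_diff : DifferentiableAt ℂ fnF 0 := by
  have h0 : ‖(0:ℂ)‖ < 1 := by simp
  have a1 := (anA 0 h0).differentiableAt
  have b1 := (anB 0 h0).differentiableAt
  have a2 := (anA 0 h0).deriv.differentiableAt
  have b2 := (anB 0 h0).deriv.differentiableAt
  have a3 : DifferentiableAt ℂ (fun y => thA (-y)) 0 :=
    DifferentiableAt.comp (0:ℂ) (g := thA) (f := fun y => -y) (by simpa using a1) (by fun_prop)
  have n1 := A_ne_zero 0 h0
  have n2 := B_ne_zero 0 h0
  unfold fnF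
  have t1 := (differentiableAt_id.mul b2).div b1 n2
  have t2 := (differentiableAt_id.mul a2).div a1 n1
  exact (((t1.const_mul 4).const_add 1).sub (t2.const_mul 4)).sub (a3.pow 4)

lemma local_bound : ∃ ε : ℝ, 0 < ε ∧ ε ≤ 1 / 200 ∧ ∃ C : ℝ, 0 ≤ C ∧ ∀ y : ℂ, ‖y‖ < ε →
    ‖fnF y‖ ≤ C * ‖y‖ ∧ ‖thB y ^ 2 / thA (-y) ^ 2‖ ≤ 2 := by
  have h0 : ‖(0:ℂ)‖ < 1 := by simp
  obtain ⟨C, hC⟩ := F_diff.isBigO_sub.bound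
  have ct : ContinuousAt (fun y => ‖thB y ^ 2 / thA (-y) ^ 2‖) 0 := by
    have a1 := (anA 0 h0).continuousAt
    have b1 := (anB 0 h0).continuousAt
    have a3 : ContinuousAt (fun y => thA (-y)) 0 :=
      ContinuousAt.comp (x := (0:ℂ)) (g := thA) (f := fun y => -y) (by simpa using a1)
        (by fun_prop)
    exact ((b1.pow 2).div (a3.pow 2) (by simp [thA_zero])).norm
  have hr : ∀ᶠ y in nhds (0:ℂ), ‖thB y ^ 2 / thA (-y) ^ 2‖ < 2 :=
    ct.tendsto.eventually_lt_const (by simp [thA_zero, thB_zero])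
  obtain ⟨δ, hδ, h⟩ := Metric.eventually_nhds_iff.mp (hC.and hr)
  refine ⟨min δ (1 / 200), by positivity, min_le_right _ _, |C|, abs_nonneg _, fun y hy => ?_⟩
  have := h (y := y) (by simpa using hy.trans_le (min_le_left _ _))
  refine ⟨?_, this.2.le⟩
  have h1 := this.1
  rw [F_zero, sub_zero, sub_zero] at h1
  exact h1.trans (mul_le_mul_of_nonneg_right (le_abs_self C) (norm_nonneg _))

lemma F_local : ∃ ε : ℝ, 0 < ε ∧ ∀ y : ℂ, ‖y‖ < ε → fnF y = 0 := by
  obtain ⟨ε, hε, hε1, C, hC, h⟩ := local_bound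
  refine ⟨ε, hε, ?_⟩
  have all : ∀ n : ℕ, ∀ y : ℂ, ‖y‖ < ε → ‖fnF y‖ ≤ C * (1 / 2) ^ n * ‖y‖ := by
    intro n
    induction n with
    | zero => intro y hy; simpa using (h y hy).1
    | succ n ih =>
      intro y hy
      have y1 : ‖y‖ ≤ 1 / 200 := hy.le.trans hε1
      have y0 := norm_nonneg y
      have hk : ∀ k : ℕ, k ≠ 0 → ‖y ^ k‖ < ε := fun k hk => by
        rw [norm_pow]
        exact (pow_le_of_le_one y0 (by linarith) hk).trans_lt hy
      have D0 : 0 ≤ C * (1 / 2) ^ n := by positivity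
      have i2 := ih _ (hk 2 (by norm_num))
      have i4 := ih _ (hk 4 (by norm_num))
      have i8 := ih _ (hk 8 (by norm_num))
      have r2 := (h _ (hk 2 (by norm_num))).2
      have r4 := (h _ (hk 4 (by norm_num))).2
      rw [F_rel' y (by linarith)]
      rw [pow_succ (1 / 2 : ℝ) n, ← mul_assoc C]
      generalize C * (1 / 2) ^ n = D at *
      generalize thB (y ^ 2) ^ 2 / thA (-y ^ 2) ^ 2 = R2 at *
      generalize thB (y ^ 4) ^ 2 / thA (-y ^ 4) ^ 2 = R4 at *
      generalize fnF (y ^ 2) = F2 at *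
      generalize fnF (y ^ 4) = F4 at *
      generalize fnF (y ^ 8) = F8 at *
      simp only [norm_pow] at i2 i4 i8
      have b1 : ‖32 * y ^ 2 * F8 * R4‖ ≤ 32 * ‖y‖ ^ 2 * (D * ‖y‖ ^ 8) * 2 := by
        simp only [norm_mul, norm_pow, Complex.norm_ofNat]
        gcongr
      have b2 : ‖8 * y * F4 * R2‖ ≤ 8 * ‖y‖ * (D * ‖y‖ ^ 4) * 2 := by
        simp only [norm_mul, Complex.norm_ofNat]
        gcongr
      have tri : ‖F2 + 32 * y ^ 2 * F8 * R4 - 8 * y * F4 * R2‖ ≤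
          ‖F2‖ + ‖32 * y ^ 2 * F8 * R4‖ + ‖8 * y * F4 * R2‖ :=
        (norm_sub_le _ _).trans (by gcongr; exact norm_add_le _ _)
      have p : ∀ k : ℕ, ‖y‖ ^ (k + 2) ≤ 1 / 200 * ‖y‖ := fun k => by
        have : ‖y‖ ^ (k + 1) ≤ ‖y‖ := pow_le_of_le_one y0 (by linarith) (by omega)
        rw [pow_succ]
        gcongr
        linarith
      have p2 := mul_le_mul_of_nonneg_left (p 0) D0
      have p5 := mul_le_mul_of_nonneg_left (p 3) D0
      have p10 := mul_le_mul_of_nonneg_left (p 8) D0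
      norm_num at p2 p5 p10
      have Dy : 0 ≤ D * ‖y‖ := by positivity
      linarith
  intro y hy
  have t : Filter.Tendsto (fun n : ℕ => C * (1 / 2 : ℝ) ^ n * ‖y‖) Filter.atTop (nhds 0) := by
    have := ((tendsto_pow_atTop_nhds_zero_of_lt_one (r := (1 / 2 : ℝ)) (by norm_num)
      (by norm_num)).const_mul C).mul_const ‖y‖
    simpa using this
  have := ge_of_tendsto' t (fun n => all n y hy)
  exact norm_le_zero_iff.mp this

lemma F_eq_zero (y : ℂ) (hy : ‖y‖ < 1) : fnF y = 0 := by
  obtain ⟨ε, hε, h⟩ := F_local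
  have all : ∀ n : ℕ, ∀ y : ℂ, ‖y‖ < 1 → ‖y‖ ^ (2 ^ n) < ε → fnF y = 0 := by
    intro n
    induction n with
    | zero => intro y _ h2; exact h y (by simpa using h2)
    | succ n ih =>
      intro y h1 h2
      have aux : ∀ k : ℕ, 2 ≤ k → fnF (y ^ k) = 0 := by
        intro k hk
        apply ih _ (nlt h1 k (by omega))
        rw [norm_pow, ← pow_mul]
        refine lt_of_le_of_lt (pow_le_pow_of_le_one (norm_nonneg _) h1.le ?_) h2
        rw [pow_succ, mul_comm]
        gcongr
      rw [F_rel' y h1, aux 2 (by norm_num), aux 4 (by norm_num), aux 8 (by norm_num)]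
      ring
  have t := (tendsto_pow_atTop_nhds_zero_of_lt_one (norm_nonneg y) hy).comp
    (tendsto_pow_atTop_atTop_of_one_lt (r := 2) (by norm_num))
  obtain ⟨n, hn⟩ := (t.eventually_lt_const hε).exists
  exact all n y hy hn

/-- The Wronskian identity. -/
lemma wronskian (y : ℂ) (hy : ‖y‖ < 1) :
    thA y * thB y + 4 * y * deriv thB y * thA y - 4 * y * deriv thA y * thB y =
      thA y * thB y * thA (-y) ^ 4 := by
  have h := F_eq_zero y hy
  have n1 := A_ne_zero y hy
  have n2 := B_ne_zero y hy
  unfold fnF at h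
  field_simp at h
  linear_combination h

/-! ### Back to the upper half plane -/

lemma nome_lt (τ : ℂ) (hτ : 0 < τ.im) : ‖nome τ‖ < 1 := by
  unfold nome
  rw [Complex.norm_exp, Real.exp_lt_one_iff]
  simp
  positivity

lemma Theta2_eq_s5 (τ : ℂ) : Theta2 τ = nome τ * thB (nome τ ^ 4) := by
  unfold Theta2 thB
  rw [← tsum_mul_left]
  apply tsum_congr
  intro n
  rw [← pow_mul, ← pow_succ']
  congr 1; ring

lemma A_nat (y : ℂ) (hy : ‖y‖ < 1) : thA y = 1 + 2 * ∑' n : ℕ, y ^ ((n + 1) ^ 2) := by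
  unfold thA
  have hs : Summable (fun n : ℕ => y ^ (n ^ 2)) :=
    (sumNn y hy _ (fun n => by nlinarith)).of_norm
  have hs' : Summable (fun n : ℕ => y ^ ((n + 1) ^ 2)) :=
    (sumNn y hy _ (fun n => by nlinarith)).of_norm
  have e : ∀ n : ℕ, y ^ ((-((n : ℤ) + 1)).natAbs ^ 2) = y ^ ((n + 1) ^ 2) := fun n => by
    have : (-((n : ℤ) + 1)).natAbs = n + 1 := by omega
    rw [this]
  rw [tsum_of_nat_of_neg_add_one (by simpa using hs) (hs'.congr fun n => (e n).symm)]
  simp only [e, Int.natAbs_natCast]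
  rw [hs.tsum_eq_zero_add]
  simp; ring

lemma Theta3_eq (τ : ℂ) (hτ : 0 < τ.im) : Theta3 τ = thA (nome τ ^ 4) := by
  rw [A_nat _ (nlt (nome_lt τ hτ) 4 (by norm_num))]
  unfold Theta3
  simp only [← pow_mul]

lemma Theta4_eq (τ : ℂ) (hτ : 0 < τ.im) : Theta4 τ = thA (-nome τ ^ 4) := by
  rw [A_nat _ (nneg (nlt (nome_lt τ hτ) 4 (by norm_num)))]
  unfold Theta4
  congr 2
  apply tsum_congr
  intro n
  rw [neg_pow (nome τ ^ 4), ← pow_mul]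
  congr 1
  rw [sq, pow_mul]
  rcases Nat.even_or_odd (n + 1) with h | h <;> simp [h.neg_one_pow]

/-- For `τ ∈ ℍ`:
`(q d/dq)[(16Θ₂⁴+Θ₃⁴)/(Θ₂²Θ₃²)] = −2Θ₄⁸/(Θ₂²Θ₃²)`, where `q d/dq = (2πi)⁻¹ d/dτ`. -/
theorem stmt5 (τ : ℂ) (hτ : 0 < τ.im) :
    (1 / (2 * (π : ℂ) * I)) *
        deriv (fun σ : ℂ => (16 * Theta2 σ ^ 4 + Theta3 σ ^ 4) / (Theta2 σ ^ 2 * Theta3 σ ^ 2)) τ =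
      -2 * Theta4 τ ^ 8 / (Theta2 τ ^ 2 * Theta3 τ ^ 2) := by
  have hq := nome_lt τ hτ
  have hy := nlt hq 4 (by norm_num)
  have dq : HasDerivAt nome (2 * (π : ℂ) * I * nome τ) τ := by
    have := ((hasDerivAt_id τ).const_mul (2 * (π : ℂ) * I)).cexp
    unfold nome
    refine HasDerivAt.congr_deriv (f := fun τ => cexp (2 * (π : ℂ) * I * τ)) this ?_
    simp [mul_comm]
  have dy := dq.pow 4
  have d2 : HasDerivAt Theta2 (2 * (π : ℂ) * I * nome τ *
      (thB (nome τ ^ 4) + 4 * nome τ ^ 4 * deriv thB (nome τ ^ 4))) τ := by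
    have h := dq.mul ((dB _ hy).comp τ dy)
    have e : Theta2 = fun τ => nome τ * thB (nome τ ^ 4) := funext Theta2_eq_s5
    rw [e]
    refine HasDerivAt.congr_deriv (f := fun τ => nome τ * thB (nome τ ^ 4)) h ?_
    simp [Function.comp]
    ring
  have d3 : HasDerivAt Theta3 (2 * (π : ℂ) * I * (4 * nome τ ^ 4 * deriv thA (nome τ ^ 4))) τ := by
    have h := (dA _ hy).comp τ dy
    have e : Theta3 =ᶠ[nhds τ] fun τ => thA (nome τ ^ 4) := by
      filter_upwards [Complex.continuous_im.tendsto τ |>.eventually_const_lt hτ] with σ hσ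
      exact Theta3_eq σ hσ
    refine HasDerivAt.congr_of_eventuallyEq ?_ e
    refine HasDerivAt.congr_deriv (f := fun τ => thA (nome τ ^ 4)) h ?_
    simp
    ring
  have q0 : nome τ ≠ 0 := Complex.exp_ne_zero _
  have n1 := A_ne_zero _ hy
  have n2 := B_ne_zero _ hy
  have z2 : Theta2 τ ≠ 0 := by rw [Theta2_eq_s5]; exact mul_ne_zero q0 n2
  have z3 : Theta3 τ ≠ 0 := by rw [Theta3_eq τ hτ]; exact n1
  have W := wronskian _ hy
  have Q := quartic _ hy
  have d := (((d2.pow 4).const_mul 16).add (d3.pow 4)).div ((d2.pow 2).mul (d3.pow 2))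
    (mul_ne_zero (pow_ne_zero 2 z2) (pow_ne_zero 2 z3))
  have hd := d.deriv
  have hfun : (fun σ : ℂ => (16 * Theta2 σ ^ 4 + Theta3 σ ^ 4) / (Theta2 σ ^ 2 * Theta3 σ ^ 2)) =
    (((fun y => 16 * (Theta2 ^ 4) y) + Theta3 ^ 4) / (Theta2 ^ 2 * Theta3 ^ 2)) := rfl
  rw [hfun, hd]
  simp only [Pi.add_apply, Pi.mul_apply, Pi.pow_apply]
  have hpi : (2 * (π : ℂ) * I) ≠ 0 := Complex.two_pi_I_ne_zero
  rw [Theta2_eq_s5, Theta3_eq τ hτ, Theta4_eq τ hτ]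
  generalize 2 * (π : ℂ) * I = c at *
  generalize thA (-nome τ ^ 4) = M at *
  generalize deriv thA (nome τ ^ 4) = A' at *
  generalize deriv thB (nome τ ^ 4) = B' at *
  generalize thA (nome τ ^ 4) = A at *
  generalize thB (nome τ ^ 4) = B at *
  generalize nome τ = q at *
  have key : A * M ^ 4 * B = A * B + 4 * q ^ 4 * B' * A - 4 * q ^ 4 * A' * B := by
    linear_combination -W
  have Q' : M ^ 4 = A ^ 4 - 16 * q ^ 4 * B ^ 4 := by linear_combination -Q
  have R : A * B * M ^ 8 = (A * B + 4 * q ^ 4 * B' * A - 4 * q ^ 4 * A' * B) *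
      (A ^ 4 - 16 * q ^ 4 * B ^ 4) := by
    rw [← key, ← Q']; ring
  have R' : M ^ 8 = (A * B + 4 * q ^ 4 * B' * A - 4 * q ^ 4 * A' * B) *
      (A ^ 4 - 16 * q ^ 4 * B ^ 4) / (A * B) := by
    rw [← R]; field_simp
  rw [R']
  field_simp
  push_cast
  ring
end
end
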